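/- Let (R,m) be a Noetherian local ring and I an ideal of R. Let x_1,…,x_s,y be a minimal generating set of I, where J=(x_1,…,x_s) is a reduction of I with reduction number r_J(I) = 1. Suppose (a') x_1,…,x_s is a d-sequence, (b') ((x_1,…,x_{i-1}) : x_i) ∩ I = (x_1,…,x_{i-1}) for all i = 1,…,s, and (c') (x_1,…,x_{i-1}) ∩ I^2 = (x_1,…,x_{i-1})I for all i = 1,…,s−1. Then rt(I) = 2, there are isomorphisms of R-modules (Q/Q⟨1⟩)_2 ≅ (JI : y^2)/(J : y) = R/(J : y), and there is a form Y^2 − Σ_i X_i F_i ∈ Q_2, with F_i homogeneous of degree 1, such that Q = (Y^2 − Σ_i X_i F_i) + Q⟨1⟩. -/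

import Mathlib

open MvPolynomial

section Defs

variable {R : Type*} [CommRing R]

/-- The presentation of the Rees algebra of the ideal generated by `g`,
sending the `i`-th variable to `(g i) · t` inside `R[t]`. -/
noncomputable def reesPres {m : ℕ} (g : Fin m → R) :
    MvPolynomial (Fin m) R →ₐ[R] Polynomial R :=
  aeval fun i => Polynomial.C (g i) * Polynomial.X

/-- `Q`, the ideal of equations of the Rees algebra w.r.t. the generators `g`. -/
noncomputable def presKer {m : ℕ} (g : Fin m → R) : Ideal (MvPolynomial (Fin m) R) :=
  RingHom.ker (reesPres g)

/-- `Q⟨d⟩`, the subideal of `Q` generated by the homogeneous equations of degree at most `d`. -/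
noncomputable def presKerLe {m : ℕ} (g : Fin m → R) (d : ℕ) : Ideal (MvPolynomial (Fin m) R) :=
  Ideal.span {F | F ∈ presKer g ∧ ∃ k ≤ d, F.IsHomogeneous k}

/-- `Q_n`, the `R`-module of homogeneous equations of degree `n`. -/
noncomputable def presKerHomog {m : ℕ} (g : Fin m → R) (n : ℕ) :
    Submodule R (MvPolynomial (Fin m) R) :=
  homogeneousSubmodule (Fin m) R n ⊓ (presKer g).restrictScalars R

/-- `(Q/Q⟨n-1⟩)_n`, the degree-`n` part of `Q/Q⟨n-1⟩`. -/
abbrev presE {m : ℕ} (g : Fin m → R) (n : ℕ) :=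
  presKerHomog g n ⧸
    Submodule.comap (presKerHomog g n).subtype ((presKerLe g (n - 1)).restrictScalars R)

/-- A `d`-sequence: it minimally generates `(x₁,…,xₛ)`, and
`((x₁,…,xᵢ) : xᵢ₊₁xₖ) = ((x₁,…,xᵢ) : xₖ)` for all `0 ≤ i ≤ s-1`, `k ≥ i+1`. -/
def IsDSequence {s : ℕ} (x : Fin s → R) : Prop :=
  (∀ i : Fin s, Ideal.span (Set.range x) ≠ Ideal.span (x '' {j | j ≠ i})) ∧
  ∀ i k : Fin s, i ≤ k →
    (Ideal.span (x '' {j | j < i})).colon (Ideal.span {x i * x k})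
      = (Ideal.span (x '' {j | j < i})).colon (Ideal.span {x k})

end Defs

/-!
Write `Jₖ = (x₁, …, xₖ)`, so `J = Jₛ`, and recall `I² = J I`. The colon condition says that `xₖ₊₁`
is a nonzerodivisor on `I / Jₖ`, and a double induction (ascending in `n`, descending in `k`)
turns it into `Jₖ ∩ Iⁿ⁺¹ = Jₖ Iⁿ` for all `k` and `n`. An equation `G + Xₖ₊₁ P` of degree at least
two with `G ∈ (X₁, …, Xₖ)` then has `P(x, y) ∈ Jₖ Iⁿ`, so `P` agrees modulo an equation of lower
degree with a form in `(X₁, …, Xₖ)`, and the variable `Xₖ₊₁` is removed. Hence every equation of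
degree at least two in `(X₁, …, Xₛ)` comes from lower degree. Modulo lower degree only the
coefficient of `Yⁿ` in an equation of degree `n` matters; it ranges over `(J Iⁿ⁻¹ : yⁿ)`, and
`(J Iⁿ⁻² : yⁿ⁻¹)` is the part coming from lower degree. Since `y² ∈ J I`, there is an equation with
leading term `Y²`, which generates the rest.
-/

section VariableIdeals

variable {σ R : Type*} [CommRing R]

theorem coeff_single_eq_zero_of_mem_span_X {i : σ} {F : MvPolynomial σ R}
    (hF : F ∈ Ideal.span (X '' {i}ᶜ)) (n : ℕ) : coeff (Finsupp.single i n) F = 0 := by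
  by_contra hne
  obtain ⟨j, hji, hj⟩ := mem_ideal_span_X_image.mp hF _ (mem_support_iff.mpr hne)
  exact hj (Finsupp.single_eq_of_ne hji)

theorem sub_C_coeff_mul_X_pow_mem_span_X {n : ℕ} {F : MvPolynomial σ R}
    (hF : F.IsHomogeneous n) (i : σ) :
    F - C (coeff (Finsupp.single i n) F) * X i ^ n ∈ Ideal.span (X '' {i}ᶜ) := by
  classical
  rw [mem_ideal_span_X_image]
  intro d hd
  by_contra! hpure
  have hdi : d = Finsupp.single i (d i) := by
    ext j
    rcases eq_or_ne j i with rfl | hji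
    · rw [Finsupp.single_eq_same]
    · rw [Finsupp.single_eq_of_ne hji, hpure j hji]
  rw [mem_support_iff, C_mul_X_pow_eq_monomial, coeff_sub, coeff_monomial] at hd
  rcases eq_or_ne (d i) n with hdn | hdn
  · rw [hdn] at hdi
    simp [hdi] at hd
  · have hdeg : d.degree ≠ n := by rwa [hdi, Finsupp.degree_single]
    have hne : Finsupp.single i n ≠ d := by
      rintro rfl
      exact hdn Finsupp.single_eq_same
    rw [hF.coeff_eq_zero hdeg, if_neg hne, sub_zero] at hd
    exact hd rfl

theorem homogeneousComponent_add_mul_of_isHomogeneous {k : ℕ} {F : MvPolynomial σ R}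
    (hF : F.IsHomogeneous k) (G : MvPolynomial σ R) (n : ℕ) :
    homogeneousComponent (k + n) (F * G) = F * homogeneousComponent n G := by
  have hcomp (j : ℕ) : homogeneousComponent (k + n) (F * homogeneousComponent j G) =
      if n = j then F * homogeneousComponent j G else 0 := by
    rw [homogeneousComponent_of_mem (hF.mul (homogeneousComponent_isHomogeneous j G))]
    simp only [Nat.add_left_cancel_iff]
  conv_lhs => rw [← sum_homogeneousComponent G, Finset.mul_sum, map_sum]
  simp only [hcomp, Finset.sum_ite_eq, Finset.mem_range, Nat.lt_succ_iff]
  split_ifs with hn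
  · rfl
  · rw [homogeneousComponent_eq_zero n G (not_le.mp hn), mul_zero]

theorem homogeneousComponent_mem_span_X {S : Set σ} {F : MvPolynomial σ R}
    (hF : F ∈ Ideal.span (X '' S)) (n : ℕ) :
    homogeneousComponent n F ∈ Ideal.span (X '' S) := by
  rw [mem_ideal_span_X_image] at hF ⊢
  intro d hd
  rw [support_homogeneousComponent, Finset.mem_filter] at hd
  exact hF d hd.1

theorem exists_isHomogeneous_eq_add_X_mul {i : σ} {S : Set σ} {n : ℕ} {F : MvPolynomial σ R}
    (hF : F.IsHomogeneous (n + 1)) (hFS : F ∈ Ideal.span (X '' insert i S)) :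
    ∃ G ∈ Ideal.span (X '' S), G.IsHomogeneous (n + 1) ∧
      ∃ P : MvPolynomial σ R, P.IsHomogeneous n ∧ F = G + X i * P := by
  rw [Set.image_insert_eq, Ideal.mem_span_insert] at hFS
  obtain ⟨P, G, hG, rfl⟩ := hFS
  refine ⟨homogeneousComponent (n + 1) G, homogeneousComponent_mem_span_X hG _,
    homogeneousComponent_isHomogeneous _ _, homogeneousComponent n P,
    homogeneousComponent_isHomogeneous _ _, ?_⟩
  rw [← homogeneousComponent_add_mul_of_isHomogeneous (isHomogeneous_X R i), add_comm 1 n,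
    ← map_add, add_comm G, mul_comm (X i), homogeneousComponent_eq_self hF]

theorem exists_isHomogeneous_eq_sum_X_mul {ι : Type*} [Fintype ι] {v : ι → σ} {n : ℕ}
    {F : MvPolynomial σ R} (hF : F.IsHomogeneous (n + 1))
    (hFv : F ∈ Ideal.span (X '' Set.range v)) :
    ∃ P : ι → MvPolynomial σ R, (∀ i, (P i).IsHomogeneous n) ∧ F = ∑ i, X (v i) * P i := by
  rw [← Set.range_comp, Ideal.mem_span_range_iff_exists_fun] at hFv
  obtain ⟨P, rfl⟩ := hFv
  refine ⟨fun i => homogeneousComponent n (P i),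
    fun i => homogeneousComponent_isHomogeneous _ _, ?_⟩
  rw [← homogeneousComponent_eq_self hF, map_sum]
  refine Finset.sum_congr rfl fun i _ => ?_
  rw [mul_comm, add_comm n, Function.comp_apply,
    homogeneousComponent_add_mul_of_isHomogeneous (isHomogeneous_X R (v i))]

variable {g : σ → R} {S : Set σ} {n : ℕ}

theorem eval_mem_span_image_mul_span_pow {F : MvPolynomial σ R}
    (hF : F.IsHomogeneous (n + 1)) (hFS : F ∈ Ideal.span (X '' S)) :
    eval g F ∈ Ideal.span (g '' S) * Ideal.span (Set.range g) ^ n := by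
  rw [F.as_sum, map_sum]
  refine Ideal.sum_mem _ fun d hd => ?_
  obtain ⟨i, hiS, hdi⟩ := mem_ideal_span_X_image.mp hFS d hd
  obtain ⟨e, rfl⟩ : ∃ e, d = Finsupp.single i 1 + e := by
    refine le_iff_exists_add.mp ?_
    rwa [Finsupp.single_le_iff, Nat.one_le_iff_ne_zero]
  have hdeg : e.degree = n := by
    have hd_deg : n + 1 = (Finsupp.single i 1 + e).degree := hF.degree_eq_sum_deg_support hd
    rw [map_add, Finsupp.degree_single] at hd_deg
    omega
  rw [monomial_single_add, pow_one, map_mul, eval_X]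
  exact Ideal.mul_mem_mul (Ideal.subset_span ⟨i, hiS, rfl⟩)
    ((Ideal.mem_span_pow_iff_exists_isHomogeneous g _).mpr
      ⟨_, isHomogeneous_monomial _ hdeg, rfl⟩)

theorem exists_isHomogeneous_eval_eq {u : R}
    (hu : u ∈ Ideal.span (g '' S) * Ideal.span (Set.range g) ^ n) :
    ∃ H ∈ Ideal.span (X '' S), H.IsHomogeneous (n + 1) ∧ eval g H = u := by
  let forms : Submodule R (MvPolynomial σ R) :=
    (Ideal.span (X '' S)).restrictScalars R ⊓ homogeneousSubmodule σ R (n + 1)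
  suffices Ideal.span (g '' S) * Ideal.span (Set.range g) ^ n ≤
      forms.map (aeval g).toLinearMap by
    obtain ⟨H, ⟨hHS, hH⟩, hHu⟩ := this hu
    exact ⟨H, hHS, hH, hHu⟩
  refine Ideal.mul_le.mpr fun a ha b hb => ?_
  obtain ⟨P, hP, rfl⟩ := (Ideal.mem_span_pow_iff_exists_isHomogeneous g b).mp hb
  induction ha using Submodule.span_induction with
  | mem a ha =>
    obtain ⟨i, hi, rfl⟩ := ha
    refine ⟨X i * P, ⟨?_, ?_⟩, by simp⟩
    · exact Ideal.mul_mem_right _ _ (Ideal.subset_span ⟨i, hi, rfl⟩)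
    · exact add_comm 1 n ▸ (isHomogeneous_X R i).mul hP
  | zero => rw [zero_mul]; exact Submodule.zero_mem _
  | add a b _ _ ha hb => rw [add_mul]; exact Submodule.add_mem _ ha hb
  | smul r a _ ha => rw [smul_mul_assoc]; exact Submodule.smul_mem _ r ha

end VariableIdeals

section Equations

variable {R : Type*} [CommRing R] {m : ℕ} {g : Fin m → R}

theorem coeff_reesPres (g : Fin m → R) (F : MvPolynomial (Fin m) R) (n : ℕ) :
    (reesPres g F).coeff n = eval g (homogeneousComponent n F) := by
  induction F using MvPolynomial.induction_on' with
  | add p q hp hq => rw [map_add, map_add, map_add, Polynomial.coeff_add, hp, hq]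
  | monomial d a =>
    have hpres : reesPres g (monomial d a) =
        Polynomial.C (eval g (monomial d a)) * Polynomial.X ^ d.degree := by
      simp [reesPres, aeval_monomial, eval_monomial, Finsupp.prod, mul_pow,
        Finset.prod_mul_distrib, Finset.prod_pow_eq_pow_sum, Finsupp.degree_apply, mul_assoc]
    rw [hpres, Polynomial.coeff_C_mul_X_pow,
      homogeneousComponent_of_mem (isHomogeneous_monomial a rfl), apply_ite (eval g), map_zero]

theorem mem_presKer_iff_forall_homogeneousComponent {F : MvPolynomial (Fin m) R} :
    F ∈ presKer g ↔ ∀ n, eval g (homogeneousComponent n F) = 0 := by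
  simp_rw [← coeff_reesPres]
  exact Polynomial.ext_iff

theorem mem_presKer_iff_eval_eq_zero {n : ℕ} {F : MvPolynomial (Fin m) R}
    (hF : F.IsHomogeneous n) : F ∈ presKer g ↔ eval g F = 0 := by
  rw [mem_presKer_iff_forall_homogeneousComponent]
  refine ⟨fun h => homogeneousComponent_eq_self hF ▸ h n, fun h k => ?_⟩
  rw [homogeneousComponent_of_mem hF]
  split_ifs
  · exact h
  · exact map_zero _

theorem homogeneousComponent_mem_presKer {F : MvPolynomial (Fin m) R} (hF : F ∈ presKer g)
    (n : ℕ) : homogeneousComponent n F ∈ presKer g :=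
  (mem_presKer_iff_eval_eq_zero (homogeneousComponent_isHomogeneous n F)).mpr
    (mem_presKer_iff_forall_homogeneousComponent.mp hF n)

theorem presKerLe_le_presKer (g : Fin m → R) (d : ℕ) : presKerLe g d ≤ presKer g :=
  Ideal.span_le.mpr fun _ h => h.1

theorem presKerLe_mono (g : Fin m → R) : Monotone (presKerLe g) :=
  fun _ _ hde => Ideal.span_mono fun _ ⟨hF, k, hk, hFk⟩ => ⟨hF, k, hk.trans hde, hFk⟩

theorem mem_presKerLe_of_isHomogeneous {n : ℕ} {F : MvPolynomial (Fin m) R}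
    (hF : F.IsHomogeneous n) (hFQ : F ∈ presKer g) : F ∈ presKerLe g n :=
  Ideal.subset_span ⟨hFQ, n, le_rfl, hF⟩

theorem presKerLe_succ_le {n : ℕ} {A : Ideal (MvPolynomial (Fin m) R)} (hA : presKerLe g n ≤ A)
    (hn : ∀ F ∈ presKer g, F.IsHomogeneous (n + 1) → F ∈ A) : presKerLe g (n + 1) ≤ A := by
  refine Ideal.span_le.mpr ?_
  rintro F ⟨hFQ, k, hk, hF⟩
  rcases Nat.le_succ_iff.mp hk with hk | rfl
  · exact hA (Ideal.subset_span ⟨hFQ, k, hk, hF⟩)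
  · exact hn F hFQ hF

theorem presKer_le_of_forall_presKerLe_le {A : Ideal (MvPolynomial (Fin m) R)}
    (h : ∀ n, presKerLe g n ≤ A) : presKer g ≤ A := by
  intro F hF
  rw [← sum_homogeneousComponent F]
  exact Ideal.sum_mem _ fun n _ => h n <| mem_presKerLe_of_isHomogeneous
    (homogeneousComponent_isHomogeneous n F) (homogeneousComponent_mem_presKer hF n)

end Equations

section RelativelyRegular

variable {R : Type*} [CommRing R] {m : ℕ}

/-- The ideal `(g₁, …, gₖ)` generated by the first `k` terms of a family. It is applied both to
generators of an ideal of `R` and to the variables of a polynomial ring. -/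
def prefixIdeal (g : Fin m → R) (k : ℕ) : Ideal R :=
  Ideal.span (g '' {j | (j : ℕ) < k})

/-- The first `r` terms of `g` form a relatively regular sequence with respect to `I`, that is,
`((g₁, …, gᵢ₋₁) : gᵢ) ∩ I ⊆ (g₁, …, gᵢ₋₁)` for `1 ≤ i ≤ r`. -/
def IsRelativelyRegular (g : Fin m → R) (I : Ideal R) (r : ℕ) : Prop :=
  ∀ i : Fin m, (i : ℕ) < r → ∀ w ∈ I, g i * w ∈ prefixIdeal g i → w ∈ prefixIdeal g i

theorem setOf_val_lt_succ (i : Fin m) :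
    {j : Fin m | (j : ℕ) < i + 1} = insert i {j : Fin m | (j : ℕ) < i} := by
  ext j
  simp only [Set.mem_insert_iff, Set.mem_ofPred_eq, Fin.ext_iff]
  omega

theorem prefixIdeal_succ (g : Fin m → R) (i : Fin m) :
    prefixIdeal g (i + 1) = Ideal.span {g i} ⊔ prefixIdeal g i := by
  rw [prefixIdeal, setOf_val_lt_succ, Set.image_insert_eq, Ideal.span_insert, prefixIdeal]

theorem prefixIdeal_inf_pow_succ_le {g : Fin m → R} {I : Ideal R} {r : ℕ} (hrm : r ≤ m)
    (hg : ∀ i, g i ∈ I) (hI : I ^ 2 = prefixIdeal g r * I) (hreg : IsRelativelyRegular g I r)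
    (n : ℕ) {k : ℕ} (hk : k ≤ r) :
    prefixIdeal g k ⊓ I ^ (n + 1) ≤ prefixIdeal g k * I ^ n := by
  induction n generalizing k with
  | zero => simp
  | succ n ih =>
    induction hk using Nat.decreasingInduction with
    | self =>
      refine inf_le_right.trans_eq ?_
      rw [show n + 1 + 1 = 2 + n by ring, pow_add, hI, mul_assoc, ← pow_succ']
    | of_succ k hk ihk =>
      let i : Fin m := ⟨k, hk.trans_le hrm⟩
      have hsucc : prefixIdeal g (k + 1) = Ideal.span {g i} ⊔ prefixIdeal g k :=
        prefixIdeal_succ g i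
      rintro u ⟨huk, huI⟩
      have hu : u ∈ prefixIdeal g (k + 1) * I ^ (n + 1) :=
        ihk ⟨hsucc ▸ Ideal.mem_sup_right huk, huI⟩
      rw [hsucc, Ideal.sup_mul] at hu
      obtain ⟨z, hz, v, hv, rfl⟩ := Submodule.mem_sup.mp hu
      obtain ⟨w, hw, rfl⟩ := Ideal.mem_span_singleton_mul.mp hz
      have hgw : g i * w ∈ prefixIdeal g k :=
        (Ideal.add_mem_iff_left _ (Ideal.mul_le_left hv)).mp huk
      have hwk : w ∈ prefixIdeal g k :=
        hreg i hk w (Ideal.pow_le_self n.succ_ne_zero hw) hgw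
      have hwn : w ∈ prefixIdeal g k * I ^ n := ih hk.le ⟨hwk, hw⟩
      refine Ideal.add_mem _ ?_ hv
      rw [pow_succ', mul_left_comm]
      exact Ideal.mul_mem_mul (hg i) hwn

theorem mem_presKerLe_of_mem_prefixIdeal_X {g : Fin m → R} {r n : ℕ} (hrm : r ≤ m)
    (hreg : IsRelativelyRegular g (Ideal.span (Set.range g)) r)
    (hinf : ∀ k ≤ r, prefixIdeal g k ⊓ Ideal.span (Set.range g) ^ (n + 1) ≤
      prefixIdeal g k * Ideal.span (Set.range g) ^ n)
    {k : ℕ} (hk : k ≤ r) {F : MvPolynomial (Fin m) R} (hFk : F ∈ prefixIdeal X k)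
    (hF : F.IsHomogeneous (n + 2)) (hFQ : F ∈ presKer g) : F ∈ presKerLe g (n + 1) := by
  induction k generalizing F with
  | zero =>
    obtain rfl : F = 0 := by simpa [prefixIdeal] using hFk
    exact Ideal.zero_mem _
  | succ k ih =>
    let i : Fin m := ⟨k, hk.trans hrm⟩
    obtain ⟨G, hGk, hG, P, hP, rfl⟩ := exists_isHomogeneous_eq_add_X_mul hF
      (setOf_val_lt_succ i ▸ hFk : F ∈ Ideal.span (X '' insert i {j : Fin m | (j : ℕ) < k}))
    have hPI : eval g P ∈ Ideal.span (Set.range g) ^ (n + 1) :=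
      (Ideal.mem_span_pow_iff_exists_isHomogeneous g _).mpr ⟨P, hP, rfl⟩
    have hgP : g i * eval g P ∈ prefixIdeal g k := by
      have hsum : eval g G + g i * eval g P = 0 := by
        simpa only [map_add, map_mul, eval_X] using (mem_presKer_iff_eval_eq_zero hF).mp hFQ
      rw [eq_neg_of_add_eq_zero_right hsum]
      exact neg_mem (Ideal.mul_le_left (eval_mem_span_image_mul_span_pow hG hGk))
    have hPk : eval g P ∈ prefixIdeal g k :=
      hreg i hk _ (Ideal.pow_le_self n.succ_ne_zero hPI) hgP
    have hPkI : eval g P ∈ prefixIdeal g k * Ideal.span (Set.range g) ^ n :=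
      hinf k (Nat.le_of_succ_le hk) ⟨hPk, hPI⟩
    obtain ⟨H, hHk, hH, hHP⟩ := exists_isHomogeneous_eval_eq hPkI
    have hPH : P - H ∈ presKerLe g (n + 1) := by
      refine mem_presKerLe_of_isHomogeneous (hP.sub hH) ?_
      rw [mem_presKer_iff_eval_eq_zero (hP.sub hH), map_sub, hHP, sub_self]
    have hXPH : X i * (P - H) ∈ presKerLe g (n + 1) := Ideal.mul_mem_left _ _ hPH
    have hsplit : G + X i * P = X i * (P - H) + (G + X i * H) := by ring
    rw [hsplit] at hFQ ⊢
    refine Ideal.add_mem _ hXPH (ih (by omega) ?_ ?_ ?_)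
    · exact Ideal.add_mem _ hGk (Ideal.mul_mem_left _ _ hHk)
    · exact hG.add (by simpa only [add_comm, add_left_comm] using (isHomogeneous_X R i).mul hH)
    · exact (Ideal.add_mem_iff_right _ (presKerLe_le_presKer g _ hXPH)).mp hFQ

end RelativelyRegular

section DistinguishedVariable

variable {R : Type*} [CommRing R] {m : ℕ} {g : Fin m → R} {l : Fin m} {n : ℕ}

theorem coeff_single_mul_pow_mem_of_mem_presKer {F : MvPolynomial (Fin m) R}
    (hF : F.IsHomogeneous (n + 1)) (hFQ : F ∈ presKer g) :
    coeff (Finsupp.single l (n + 1)) F * g l ^ (n + 1) ∈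
      Ideal.span (g '' {l}ᶜ) * Ideal.span (Set.range g) ^ n := by
  have hrest := eval_mem_span_image_mul_span_pow (g := g)
    (hF.sub (isHomogeneous_C_mul_X_pow (coeff (Finsupp.single l (n + 1)) F) l (n + 1)))
    (sub_C_coeff_mul_X_pow_mem_span_X hF l)
  simpa only [map_sub, map_mul, map_pow, eval_C, eval_X,
    (mem_presKer_iff_eval_eq_zero hF).mp hFQ, zero_sub, neg_mem_iff] using hrest

theorem exists_isHomogeneous_sub_mem_presKer {c : R}
    (hc : c * g l ^ (n + 1) ∈ Ideal.span (g '' {l}ᶜ) * Ideal.span (Set.range g) ^ n) :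
    ∃ H ∈ Ideal.span (X '' {l}ᶜ), H.IsHomogeneous (n + 1) ∧
      C c * X l ^ (n + 1) - H ∈ presKer g := by
  obtain ⟨H, hHl, hH, hHc⟩ := exists_isHomogeneous_eval_eq hc
  refine ⟨H, hHl, hH, ?_⟩
  rw [mem_presKer_iff_eval_eq_zero ((isHomogeneous_C_mul_X_pow c l (n + 1)).sub hH)]
  simp [hHc]

theorem coeff_C_mul_X_pow_sub {H : MvPolynomial (Fin m) R} (hH : H ∈ Ideal.span (X '' {l}ᶜ))
    (c : R) (n : ℕ) : coeff (Finsupp.single l n) (C c * X l ^ n - H) = c := by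
  rw [coeff_sub, coeff_single_eq_zero_of_mem_span_X hH, sub_zero, C_mul_X_pow_eq_monomial,
    coeff_monomial, if_pos rfl]

theorem presKerLe_succ_le_map_colon_sup_span_X (g : Fin m → R) (l : Fin m) (n : ℕ) :
    presKerLe g (n + 1) ≤
      ((Ideal.span (g '' {l}ᶜ) * Ideal.span (Set.range g) ^ n).colon
        (Ideal.span {g l ^ (n + 1)})).map C ⊔ Ideal.span (X '' {l}ᶜ) := by
  refine Ideal.span_le.mpr ?_
  rintro F ⟨hFQ, k, hk, hF⟩
  cases k with
  | zero =>
    have hFC := totalDegree_eq_zero_iff_eq_C.mp ((totalDegree_zero_iff_isHomogeneous _).mpr hF)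
    rw [mem_presKer_iff_eval_eq_zero hF, hFC, eval_C] at hFQ
    rw [hFC, hFQ, map_zero]
    exact Ideal.zero_mem _
  | succ k =>
    obtain ⟨e, rfl⟩ : ∃ e, n = k + e := le_iff_exists_add.mp (Nat.succ_le_succ_iff.mp hk)
    rw [← add_sub_cancel (C (coeff (Finsupp.single l (k + 1)) F) * X l ^ (k + 1)) F]
    refine Submodule.add_mem_sup (Ideal.mul_mem_right _ _ (Ideal.mem_map_of_mem _ ?_))
      (sub_C_coeff_mul_X_pow_mem_span_X hF l)
    rw [Ideal.mem_colon_span_singleton, add_right_comm, pow_add _ (k + 1), pow_add _ k,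
      ← mul_assoc, ← mul_assoc]
    exact Ideal.mul_mem_mul (coeff_single_mul_pow_mem_of_mem_presKer hF hFQ)
      (Ideal.pow_mem_pow (Ideal.subset_span (Set.mem_range_self l)) e)

theorem coeff_mem_colon_of_mem_presKerLe {F : MvPolynomial (Fin m) R}
    (hF : F ∈ presKerLe g (n + 1)) (k : ℕ) :
    coeff (Finsupp.single l k) F ∈
      (Ideal.span (g '' {l}ᶜ) * Ideal.span (Set.range g) ^ n).colon
        (Ideal.span {g l ^ (n + 1)}) := by
  obtain ⟨A, hA, B, hB, rfl⟩ :=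
    Submodule.mem_sup.mp (presKerLe_succ_le_map_colon_sup_span_X g l n hF)
  rw [coeff_add, coeff_single_eq_zero_of_mem_span_X hB, add_zero]
  exact mem_map_C_iff.mp hA _

theorem mem_presKerLe_of_coeff_mem_colon
    (hlower : ∀ F ∈ Ideal.span (X '' {l}ᶜ), F.IsHomogeneous (n + 2) → F ∈ presKer g →
      F ∈ presKerLe g (n + 1))
    {F : MvPolynomial (Fin m) R} (hF : F.IsHomogeneous (n + 2)) (hFQ : F ∈ presKer g)
    (hc : coeff (Finsupp.single l (n + 2)) F ∈
      (Ideal.span (g '' {l}ᶜ) * Ideal.span (Set.range g) ^ n).colon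
        (Ideal.span {g l ^ (n + 1)})) :
    F ∈ presKerLe g (n + 1) := by
  set c := coeff (Finsupp.single l (n + 2)) F
  rw [Ideal.mem_colon_span_singleton] at hc
  obtain ⟨H, hHl, hH, hcH⟩ := exists_isHomogeneous_sub_mem_presKer hc
  have hYcH : X l * (C c * X l ^ (n + 1) - H) ∈ presKerLe g (n + 1) :=
    Ideal.mul_mem_left _ _ (mem_presKerLe_of_isHomogeneous
      ((isHomogeneous_C_mul_X_pow c l (n + 1)).sub hH) hcH)
  have hsplit : F = X l * (C c * X l ^ (n + 1) - H) +
      (F - C c * X l ^ (n + 2) + X l * H) := by ring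
  have hYH : (X l * H).IsHomogeneous (n + 2) := by
    simpa only [add_comm, add_left_comm] using (isHomogeneous_X R l).mul hH
  have hrestQ : F - C c * X l ^ (n + 2) + X l * H ∈ presKer g :=
    (Ideal.add_mem_iff_right _ (presKerLe_le_presKer g _ hYcH)).mp (hsplit ▸ hFQ)
  rw [hsplit]
  exact Ideal.add_mem _ hYcH (hlower _
    (Ideal.add_mem _ (sub_C_coeff_mul_X_pow_mem_span_X hF l) (Ideal.mul_mem_left _ _ hHl))
    ((hF.sub (isHomogeneous_C_mul_X_pow c l (n + 2))).add hYH) hrestQ)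

/-- The map `Q_{n+1} → (J I^n : y^{n+1})` extracting the coefficient of `Y^{n+1}`, where `Y` is
the variable of index `l`, `y = g l`, `I` is generated by `g` and `J` by the `g j` with `j ≠ l`. -/
noncomputable def pureCoeff (g : Fin m → R) (l : Fin m) (n : ℕ) :
    presKerHomog g (n + 1) →ₗ[R]
      (Ideal.span (g '' {l}ᶜ) * Ideal.span (Set.range g) ^ n).colon
        (Ideal.span {g l ^ (n + 1)}) :=
  (lcoeff R (Finsupp.single l (n + 1))).restrict fun _ hF =>
    Ideal.mem_colon_span_singleton.mpr (coeff_single_mul_pow_mem_of_mem_presKer hF.1 hF.2)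

theorem pureCoeff_surjective (g : Fin m → R) (l : Fin m) (n : ℕ) :
    Function.Surjective (pureCoeff g l n) := by
  rintro ⟨c, hc⟩
  obtain ⟨H, hHl, hH, hcH⟩ :=
    exists_isHomogeneous_sub_mem_presKer (Ideal.mem_colon_span_singleton.mp hc)
  exact ⟨⟨_, (isHomogeneous_C_mul_X_pow c l (n + 1)).sub hH, hcH⟩,
    Subtype.ext (coeff_C_mul_X_pow_sub hHl c _)⟩

/-- `(Q/Q⟨n+1⟩)_{n+2} ≅ (J I^{n+1} : y^{n+2}) / (J I^n : y^{n+1})`, induced by `pureCoeff`, when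
every equation of degree `n + 2` without the term `Y^{n+2}` lies in `Q⟨n+1⟩`. -/
noncomputable def presEEquivColonQuotient
    (hlower : ∀ F ∈ Ideal.span (X '' {l}ᶜ), F.IsHomogeneous (n + 2) → F ∈ presKer g →
      F ∈ presKerLe g (n + 1)) :
    presE g (n + 2) ≃ₗ[R]
      (Ideal.span (g '' {l}ᶜ) * Ideal.span (Set.range g) ^ (n + 1)).colon
          (Ideal.span {g l ^ (n + 2)}) ⧸
        Submodule.comap
          ((Ideal.span (g '' {l}ᶜ) * Ideal.span (Set.range g) ^ (n + 1)).colon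
            (Ideal.span {g l ^ (n + 2)})).subtype
          ((Ideal.span (g '' {l}ᶜ) * Ideal.span (Set.range g) ^ n).colon
            (Ideal.span {g l ^ (n + 1)})) :=
  (Submodule.quotEquivOfEq _ _ <| by
    ext F
    rw [LinearMap.ker_comp, Submodule.ker_mkQ]
    exact ⟨fun hF => coeff_mem_colon_of_mem_presKerLe hF _,
      mem_presKerLe_of_coeff_mem_colon hlower F.2.1 F.2.2⟩).trans
  ((Submodule.mkQ _ ∘ₗ pureCoeff g l (n + 1)).quotKerEquivOfSurjective <|
    (Submodule.mkQ_surjective _).comp (pureCoeff_surjective g l (n + 1)))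

theorem presKer_eq_span_sup_presKerLe {d : ℕ} {H : MvPolynomial (Fin m) R}
    (hHl : H ∈ Ideal.span (X '' {l}ᶜ)) (hH : H.IsHomogeneous (d + 1))
    (hG : X l ^ (d + 1) - H ∈ presKer g)
    (hlower : ∀ n ≥ d, ∀ F ∈ Ideal.span (X '' {l}ᶜ), F.IsHomogeneous (n + 1) →
      F ∈ presKer g → F ∈ presKerLe g n) :
    presKer g = Ideal.span {X l ^ (d + 1) - H} ⊔ presKerLe g d := by
  refine le_antisymm ?_
    (sup_le ((Ideal.span_singleton_le_iff_mem _).mpr hG) (presKerLe_le_presKer g d))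
  suffices hle : ∀ n ≥ d, presKerLe g n ≤ Ideal.span {X l ^ (d + 1) - H} ⊔ presKerLe g d from
    presKer_le_of_forall_presKerLe_le fun n =>
      (presKerLe_mono g (le_max_left n d)).trans (hle _ (le_max_right n d))
  intro n hn
  induction n, hn using Nat.le_induction with
  | base => exact le_sup_right
  | succ n hn ih =>
    refine presKerLe_succ_le ih fun F hFQ hF => ?_
    obtain ⟨e, rfl⟩ : ∃ e, n = d + e := le_iff_exists_add.mp hn
    set c := coeff (Finsupp.single l (d + e + 1)) F
    have hsplit : F = C c * X l ^ e * (X l ^ (d + 1) - H) +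
        (F - C c * X l ^ (d + e + 1) + C c * X l ^ e * H) := by ring
    have hrestQ : F - C c * X l ^ (d + e + 1) + C c * X l ^ e * H ∈ presKer g :=
      (Ideal.add_mem_iff_right _ (Ideal.mul_mem_left _ _ hG)).mp (hsplit ▸ hFQ)
    have hcH : (C c * X l ^ e * H).IsHomogeneous (d + e + 1) := by
      rw [add_right_comm, add_comm]
      exact (isHomogeneous_C_mul_X_pow c l e).mul hH
    rw [hsplit]
    refine Ideal.add_mem _ (Ideal.mul_mem_left _ _
      (Ideal.mem_sup_left (Ideal.mem_span_singleton_self _))) (ih (hlower _ hn _ ?_ ?_ hrestQ))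
    · exact Ideal.add_mem _ (sub_C_coeff_mul_X_pow_mem_span_X hF l) (Ideal.mul_mem_left _ _ hHl)
    · exact (hF.sub (isHomogeneous_C_mul_X_pow c l _)).add hcH

theorem isLeast_presKer_eq_presKerLe {H : MvPolynomial (Fin m) R}
    (hHl : H ∈ Ideal.span (X '' {l}ᶜ)) (hH : H.IsHomogeneous (n + 2))
    (hQ : presKer g = Ideal.span {X l ^ (n + 2) - H} ⊔ presKerLe g (n + 1))
    (hl : g l ^ (n + 1) ∉ Ideal.span (g '' {l}ᶜ) * Ideal.span (Set.range g) ^ n) :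
    IsLeast {N : ℕ | 1 ≤ N ∧ presKer g = presKerLe g N} (n + 2) := by
  have hGQ : X l ^ (n + 2) - H ∈ presKer g :=
    hQ ▸ Ideal.mem_sup_left (Ideal.mem_span_singleton_self _)
  have hG : X l ^ (n + 2) - H ∈ presKerLe g (n + 2) :=
    mem_presKerLe_of_isHomogeneous ((isHomogeneous_X_pow l _).sub hH) hGQ
  refine ⟨⟨by omega, le_antisymm ?_ (presKerLe_le_presKer g _)⟩, ?_⟩
  · rw [hQ]
    exact sup_le ((Ideal.span_singleton_le_iff_mem _).mpr hG) (presKerLe_mono g (Nat.le_succ _))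
  · rintro N ⟨-, hN⟩
    by_contra! hlt
    have hGlow : X l ^ (n + 2) - H ∈ presKerLe g (n + 1) :=
      presKerLe_mono g (Nat.le_of_lt_succ hlt) (hN ▸ hGQ)
    have hcoeff : coeff (Finsupp.single l (n + 2)) (X l ^ (n + 2) - H) = 1 := by
      simpa only [map_one, one_mul] using coeff_C_mul_X_pow_sub hHl 1 (n + 2)
    have hone := coeff_mem_colon_of_mem_presKerLe (l := l) hGlow (n + 2)
    rw [hcoeff, Ideal.mem_colon_span_singleton, one_mul] at hone
    exact hl hone

end DistinguishedVariable

section SnocGenerators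

theorem setOf_val_lt_eq_compl_last (s : ℕ) :
    {j : Fin (s + 1) | (j : ℕ) < s} = {Fin.last s}ᶜ := by
  ext j
  exact Fin.lt_last_iff_ne_last

theorem image_snoc_compl_last {α : Type*} {s : ℕ} (x : Fin s → α) (y : α) :
    (Fin.snoc x y : Fin (s + 1) → α) '' {Fin.last s}ᶜ = Set.range x := by
  rw [← setOf_val_lt_eq_compl_last, ← Fin.range_castSucc, ← Set.range_comp,
    Fin.snoc_comp_castSucc]

variable {R : Type*} [CommRing R] {s : ℕ} {x : Fin s → R} {y : R}

theorem prefixIdeal_snoc {k : ℕ} (hk : k ≤ s) :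
    prefixIdeal (Fin.snoc x y : Fin (s + 1) → R) k = prefixIdeal x k := by
  have hset : {j : Fin (s + 1) | (j : ℕ) < k} = Fin.castSucc '' {j : Fin s | (j : ℕ) < k} := by
    ext j
    constructor
    · exact fun hj => ⟨⟨j, hj.trans_le hk⟩, hj, rfl⟩
    · rintro ⟨i, hi, rfl⟩
      exact hi
  simp only [prefixIdeal, hset, Set.image_image, Fin.snoc_castSucc]

theorem isRelativelyRegular_snoc {I : Ideal R}
    (hb : ∀ i : Fin s, (Ideal.span (x '' {j | j < i})).colon (Ideal.span {x i}) ⊓ I ≤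
      Ideal.span (x '' {j | j < i})) :
    IsRelativelyRegular (Fin.snoc x y : Fin (s + 1) → R) I s := by
  intro i his w hw hiw
  obtain ⟨i, rfl⟩ : ∃ j : Fin s, i = j.castSucc := ⟨⟨i, his⟩, rfl⟩
  rw [prefixIdeal_snoc his.le] at hiw ⊢
  rw [Fin.snoc_castSucc, mul_comm] at hiw
  exact hb i ⟨Ideal.mem_colon_span_singleton.mpr hiw, hw⟩

theorem mem_presKerLe_of_mem_span_X_compl_last {I : Ideal R}
    (hgen : I = Ideal.span (Set.range (Fin.snoc x y : Fin (s + 1) → R)))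
    (hI : I ^ 2 = Ideal.span (Set.range x) * I)
    (hreg : IsRelativelyRegular (Fin.snoc x y : Fin (s + 1) → R) I s) {n : ℕ}
    {F : MvPolynomial (Fin (s + 1)) R} (hFl : F ∈ Ideal.span (X '' {Fin.last s}ᶜ))
    (hF : F.IsHomogeneous (n + 2)) (hFQ : F ∈ presKer (Fin.snoc x y)) :
    F ∈ presKerLe (Fin.snoc x y) (n + 1) := by
  have hJ : prefixIdeal (Fin.snoc x y : Fin (s + 1) → R) s = Ideal.span (Set.range x) := by
    rw [prefixIdeal, setOf_val_lt_eq_compl_last, image_snoc_compl_last]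
  have hmem (i : Fin (s + 1)) : (Fin.snoc x y : Fin (s + 1) → R) i ∈ I :=
    hgen ▸ Ideal.subset_span (Set.mem_range_self i)
  have hinf (k : ℕ) (hk : k ≤ s) := prefixIdeal_inf_pow_succ_le s.le_succ hmem (hJ ▸ hI) hreg n hk
  rw [hgen] at hreg hinf
  exact mem_presKerLe_of_mem_prefixIdeal_X s.le_succ hreg hinf le_rfl
    (by rwa [prefixIdeal, setOf_val_lt_eq_compl_last]) hF hFQ

end SnocGenerators

section ReductionNumberOne

variable {R : Type*} [CommRing R]

theorem notMem_of_isLeast_reductionNumber {I J : Ideal R} {y : R} {r : ℕ}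
    (hgen : I = Ideal.span {y} ⊔ J) (hr : r ≠ 0)
    (hred : IsLeast {k : ℕ | I ^ (k + 1) = J * I ^ k} r) : y ∉ J := by
  intro hy
  have hIJ : I = J := by rwa [sup_eq_right.mpr ((Ideal.span_singleton_le_iff_mem J).mpr hy)] at hgen
  exact hr (Nat.le_zero.mp (hred.2 (by simp [hIJ])))

/-- The identification of `N / (N ∩ P)` with `M / P` when `N = M`. -/
noncomputable def quotientComapSubtypeEquivOfEqTop {M : Type*} [AddCommGroup M] [Module R M]
    {N : Submodule R M} (hN : N = ⊤) (P : Submodule R M) :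
    (N ⧸ P.comap N.subtype) ≃ₗ[R] M ⧸ P :=
  Submodule.Quotient.equiv _ _ (LinearEquiv.ofTop N hN) (by
    change (P.comap N.subtype).map N.subtype = P
    rw [Submodule.map_comap_subtype, hN, top_inf_eq])

variable {s : ℕ} {x : Fin s → R} {y : R}

theorem nonempty_presE_snoc_two_equiv
    (hlower : ∀ F ∈ Ideal.span (X '' {Fin.last s}ᶜ), F.IsHomogeneous 2 →
      F ∈ presKer (Fin.snoc x y) → F ∈ presKerLe (Fin.snoc x y) 1) :
    Nonempty (presE (Fin.snoc x y) 2 ≃ₗ[R]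
      (Ideal.span (Set.range x) * Ideal.span (Set.range (Fin.snoc x y))).colon
          (Ideal.span {y ^ 2}) ⧸
        Submodule.comap
          ((Ideal.span (Set.range x) * Ideal.span (Set.range (Fin.snoc x y))).colon
            (Ideal.span {y ^ 2})).subtype
          ((Ideal.span (Set.range x)).colon (Ideal.span {y}))) := by
  have e := presEEquivColonQuotient (n := 0) hlower
  rw [image_snoc_compl_last, Fin.snoc_last, zero_add, pow_one, pow_zero, pow_one, mul_one] at e
  exact ⟨e⟩

theorem exists_isHomogeneous_X_last_sq_sub_mem_presKer
    (hy : y ^ 2 ∈ Ideal.span (Set.range x) * Ideal.span (Set.range (Fin.snoc x y))) :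
    ∃ H ∈ Ideal.span (X '' {Fin.last s}ᶜ), H.IsHomogeneous 2 ∧
      X (Fin.last s) ^ 2 - H ∈ presKer (Fin.snoc x y) := by
  simpa only [map_one, one_mul] using exists_isHomogeneous_sub_mem_presKer
    (g := Fin.snoc x y) (l := Fin.last s) (n := 1) (c := 1)
    (by rwa [image_snoc_compl_last, Fin.snoc_last, one_mul, pow_one])

end ReductionNumberOne

theorem statement4_general {R : Type*} [CommRing R]
    (I : Ideal R) {s : ℕ} (x : Fin s → R) (y : R)
    (J : Ideal R) (hJ : J = Ideal.span (Set.range x))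
    (hgen : I = Ideal.span (Set.range (Fin.snoc x y)))
    (hred : IsLeast {k : ℕ | I ^ (k + 1) = J * I ^ k} 1)
    (hb : ∀ i : Fin s,
      (Ideal.span (x '' {j | j < i})).colon (Ideal.span {x i}) ⊓ I
        = Ideal.span (x '' {j | j < i})) :
    IsLeast {N : ℕ | 1 ≤ N ∧ presKer (Fin.snoc x y) = presKerLe (Fin.snoc x y) N} 2 ∧
    Nonempty (presE (Fin.snoc x y) 2 ≃ₗ[R]
      (((J * I).colon (Ideal.span {y ^ 2})) ⧸
        Submodule.comap ((J * I).colon (Ideal.span {y ^ 2})).subtype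
          (J.colon (Ideal.span {y})))) ∧
    (J * I).colon (Ideal.span {y ^ 2}) = ⊤ ∧
    Nonempty (presE (Fin.snoc x y) 2 ≃ₗ[R] (R ⧸ J.colon (Ideal.span {y}))) ∧
    ∃ F : Fin s → MvPolynomial (Fin (s + 1)) R, (∀ i, (F i).IsHomogeneous 1) ∧
      (X (Fin.last s) ^ 2 - ∑ i, X i.castSucc * F i) ∈ presKer (Fin.snoc x y) ∧
      presKer (Fin.snoc x y)
        = Ideal.span {X (Fin.last s) ^ 2 - ∑ i, X i.castSucc * F i}
            ⊔ presKerLe (Fin.snoc x y) 1 := by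
  have hI : I ^ 2 = J * I := by simpa only [Set.mem_ofPred_eq, pow_one] using hred.1
  have hreg : IsRelativelyRegular (Fin.snoc x y) I s := isRelativelyRegular_snoc fun i => (hb i).le
  have hlower (n : ℕ) : ∀ F ∈ Ideal.span (X '' {Fin.last s}ᶜ), F.IsHomogeneous (n + 2) →
      F ∈ presKer (Fin.snoc x y) → F ∈ presKerLe (Fin.snoc x y) (n + 1) :=
    fun _ => mem_presKerLe_of_mem_span_X_compl_last hgen (hJ ▸ hI) hreg
  have hIJ : I = Ideal.span {y} ⊔ J := by rw [hgen, hJ, Fin.range_snoc, Ideal.span_insert]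
  have hyJ : y ∉ J := notMem_of_isLeast_reductionNumber hIJ one_ne_zero hred
  have hy2 : y ^ 2 ∈ J * I := hI ▸ Ideal.pow_mem_pow
    (hIJ ▸ Ideal.mem_sup_left (Ideal.mem_span_singleton_self y)) 2
  have htop : (J * I).colon (Ideal.span {y ^ 2}) = ⊤ :=
    (Submodule.colon_eq_top_iff_subset _).mpr ((Ideal.span_singleton_le_iff_mem _).mpr hy2)
  subst hJ hgen
  obtain ⟨e⟩ := nonempty_presE_snoc_two_equiv (hlower 0)
  obtain ⟨H, hHl, hH, hHQ⟩ := exists_isHomogeneous_X_last_sq_sub_mem_presKer hy2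
  have hQ : presKer (Fin.snoc x y) =
      Ideal.span {X (Fin.last s) ^ 2 - H} ⊔ presKerLe (Fin.snoc x y) 1 :=
    presKer_eq_span_sup_presKerLe hHl hH hHQ fun n hn => Nat.sub_add_cancel hn ▸ hlower (n - 1)
  have hrt := isLeast_presKer_eq_presKerLe hHl hH hQ
    (by rwa [image_snoc_compl_last, Fin.snoc_last, zero_add, pow_one, pow_zero, mul_one])
  rw [← setOf_val_lt_eq_compl_last, ← Fin.range_castSucc] at hHl
  obtain ⟨F, hF, rfl⟩ := exists_isHomogeneous_eq_sum_X_mul hH hHl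
  exact ⟨hrt, ⟨e⟩, htop, ⟨e.trans (quotientComapSubtypeEquivOfEqTop htop _)⟩, F, hF, hHQ, hQ⟩

/-- Reduction number one case: `rt(I) = 2`,
`(Q/Q⟨1⟩)₂ ≅ (JI : y²)/(J : y) = R/(J : y)`, and `Q = (Y² − ∑ Xᵢ Fᵢ) + Q⟨1⟩`. -/
theorem statement4 {R : Type*} [CommRing R] [IsNoetherianRing R] [IsLocalRing R]
    (I : Ideal R) {s : ℕ} (x : Fin s → R) (y : R)
    (J : Ideal R) (hJ : J = Ideal.span (Set.range x))
    (hgen : I = Ideal.span (Set.range (Fin.snoc x y)))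
    (hmin : ∀ i : Fin (s + 1), I ≠ Ideal.span (Fin.snoc x y '' {j | j ≠ i}))
    (hred : IsLeast {k : ℕ | I ^ (k + 1) = J * I ^ k} 1)
    (ha : IsDSequence x)
    (hb : ∀ i : Fin s,
      (Ideal.span (x '' {j | j < i})).colon (Ideal.span {x i}) ⊓ I
        = Ideal.span (x '' {j | j < i}))
    (hc : ∀ i : ℕ, 1 ≤ i → i ≤ s - 1 →
      Ideal.span (x '' {j | (j : ℕ) < i - 1}) ⊓ I ^ 2
        = Ideal.span (x '' {j | (j : ℕ) < i - 1}) * I) :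
    IsLeast {N : ℕ | 1 ≤ N ∧ presKer (Fin.snoc x y) = presKerLe (Fin.snoc x y) N} 2 ∧
    Nonempty (presE (Fin.snoc x y) 2 ≃ₗ[R]
      (((J * I).colon (Ideal.span {y ^ 2})) ⧸
        Submodule.comap ((J * I).colon (Ideal.span {y ^ 2})).subtype
          (J.colon (Ideal.span {y})))) ∧
    (J * I).colon (Ideal.span {y ^ 2}) = ⊤ ∧
    Nonempty (presE (Fin.snoc x y) 2 ≃ₗ[R] (R ⧸ J.colon (Ideal.span {y}))) ∧
    ∃ F : Fin s → MvPolynomial (Fin (s + 1)) R, (∀ i, (F i).IsHomogeneous 1) ∧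
      (X (Fin.last s) ^ 2 - ∑ i, X i.castSucc * F i) ∈ presKer (Fin.snoc x y) ∧
      presKer (Fin.snoc x y)
        = Ideal.span {X (Fin.last s) ^ 2 - ∑ i, X i.castSucc * F i}
            ⊔ presKerLe (Fin.snoc x y) 1 :=
  statement4_general I x y J hJ hgen hred hb
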